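/- arXiv:2307.13996 — 3 statements merged into one kernel-verified Lean document; each statement's English description precedes it below -/
import Mathlib

section
/- A function f : (k+1)^E → ℝ is k-submodular if and only if f is both orthant submodular and pairwise monotone. -/
/-- The support of `p : E → Fin (k+1)`: elements assigned a nonzero label. -/
def kSupp {E : Type*} [Fintype E] [DecidableEq E] {k : ℕ}
    (p : E → Fin (k+1)) : Finset E :=
  Finset.univ.filter (fun e => p e ≠ 0)

/-- The meet `p ⊓ q`. -/
def kInf {E : Type*} {k : ℕ} (p q : E → Fin (k+1)) : E → Fin (k+1) :=
  fun e => if p e = q e then p e else 0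

/-- The join `p ⊔ q`. -/
def kSup {E : Type*} {k : ℕ} (p q : E → Fin (k+1)) : E → Fin (k+1) :=
  fun e => if q e = 0 ∨ q e = p e then p e else if p e = 0 then q e else 0

/-- `f` is `k`-submodular. -/
def IsKSubmodular {E : Type*} {k : ℕ} (f : (E → Fin (k+1)) → ℝ) : Prop :=
  ∀ p q, f (kSup p q) + f (kInf p q) ≤ f p + f q

/-- The partial order `p ⪯ q`. -/
def kLE {E : Type*} {k : ℕ} (p q : E → Fin (k+1)) : Prop :=
  ∀ e, p e ≠ 0 → p e = q e

/-- Marginal gain `Δ_{e,i} f(p) = f(p + i·1_e) − f(p)`. -/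
def marg {E : Type*} [DecidableEq E] {k : ℕ}
    (f : (E → Fin (k+1)) → ℝ) (p : E → Fin (k+1)) (e : E) (i : Fin (k+1)) : ℝ :=
  f (Function.update p e i) - f p

/-- Orthant submodularity. -/
def OrthantSubmodular {E : Type*} [DecidableEq E] {k : ℕ}
    (f : (E → Fin (k+1)) → ℝ) : Prop :=
  ∀ (p q : E → Fin (k+1)) (e : E) (i : Fin (k+1)),
    kLE p q → q e = 0 → i ≠ 0 → marg f q e i ≤ marg f p e i

/-- Pairwise monotonicity. -/
def PairwiseMonotone {E : Type*} [DecidableEq E] {k : ℕ}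
    (f : (E → Fin (k+1)) → ℝ) : Prop :=
  ∀ (p : E → Fin (k+1)) (e : E) (i j : Fin (k+1)),
    p e = 0 → i ≠ 0 → j ≠ 0 → i ≠ j → 0 ≤ marg f p e i + marg f p e j

/-- Monotonicity of `f` with respect to `⪯`. -/
def KMonotone {E : Type*} {k : ℕ} (f : (E → Fin (k+1)) → ℝ) : Prop :=
  ∀ p q, kLE p q → f p ≤ f q

theorem aux_D {E : Type*} [DecidableEq E] {k : ℕ} {f : (E → Fin (k+1)) → ℝ}
    (hf : OrthantSubmodular f) (x y a : E → Fin (k+1)) (hxy : kLE x y) (T : Finset E) :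
    (∀ e ∈ T, y e = 0 ∧ a e ≠ 0) →
    f (T.piecewise a y) - f y ≤ f (T.piecewise a x) - f x := by
  induction T using Finset.induction_on with
  | empty => intro _; simp
  | insert e T he ih =>
    intro h
    have h1 := ih (fun e' h' => h e' (Finset.mem_insert_of_mem h'))
    have h2 := hf (T.piecewise a x) (T.piecewise a y) e (a e)
      (by
        intro e' h'
        by_cases hT : e' ∈ T
        · simp [hT]
        · simp only [Finset.piecewise_eq_of_notMem _ _ _ hT] at h' ⊢
          exact hxy e' h')
      (by simp [he, (h e (Finset.mem_insert_self _ _)).1])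
      (h e (Finset.mem_insert_self _ _)).2
    rw [Finset.piecewise_insert, Finset.piecewise_insert]
    unfold marg at h2
    linarith

theorem aux_C {E : Type*} [Fintype E] [DecidableEq E] {k : ℕ} {f : (E → Fin (k+1)) → ℝ}
    (hf : OrthantSubmodular f) (hg : PairwiseMonotone f) (q : E → Fin (k+1)) (n : ℕ) :
    ∀ p : E → Fin (k+1), (Finset.univ.filter (fun e => p e ≠ q e)).card = n →
    (∀ e, p e ≠ q e → p e ≠ 0 ∧ q e ≠ 0) →
    2 * f (kInf p q) ≤ f p + f q := by
  induction n with
  | zero =>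
    intro p hn _
    have : p = q := by
      funext e
      rw [Finset.card_eq_zero] at hn
      by_contra hne
      have : e ∈ Finset.univ.filter (fun e => p e ≠ q e) := by simp [hne]
      rw [hn] at this
      simp at this
    subst this
    have : kInf p p = p := by funext e; simp [kInf]
    rw [this]; linarith
  | succ n ih =>
    intro p hn h
    obtain ⟨e, he⟩ : (Finset.univ.filter (fun e => p e ≠ q e)).Nonempty := by
      rw [← Finset.card_pos]; omega
    have hne : p e ≠ q e := by simpa using he
    have hcard : (Finset.univ.filter
        (fun e' => (Function.update p e (q e)) e' ≠ q e')).card = n := by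
      have : Finset.univ.filter (fun e' => (Function.update p e (q e)) e' ≠ q e')
          = (Finset.univ.filter (fun e => p e ≠ q e)).erase e := by
        ext e'
        by_cases hh : e' = e
        · subst hh; simp
        · simp [hh]
      rw [this, Finset.card_erase_of_mem he, hn]; simp
    have h1 := ih (Function.update p e (q e)) hcard (by
      intro e' h'
      by_cases hh : e' = e
      · subst hh; simp at h'
      · simp only [Function.update_of_ne hh] at h' ⊢
        exact h e' h')
    have h2 := hg (Function.update p e 0) e (p e) (q e) (by simp) (h e hne).1 (h e hne).2 hne
    have h3 := hf (kInf p q) (Function.update p e 0) e (q e)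
      (by
        intro e' h'
        by_cases hh : e' = e
        · subst hh; simp [kInf, hne] at h'
        · simp only [Function.update_of_ne hh, kInf] at h' ⊢
          grind) (by simp) (h e hne).2
    have h4 : kInf (Function.update p e (q e)) q = Function.update (kInf p q) e (q e) := by
      funext e'
      by_cases hh : e' = e
      · subst hh; simp [kInf]
      · simp [hh, kInf]
    rw [h4] at h1
    simp only [marg, Function.update_idem, Function.update_eq_self] at h2 h3
    linarith

/-- `f` is `k`-submodular iff it is orthant submodular and pairwise monotone. -/
theorem kSubmodular_iff_orthant_and_pairwise
    {E : Type*} [Fintype E] [DecidableEq E] {k : ℕ} (hk : 1 ≤ k)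
    (f : (E → Fin (k+1)) → ℝ) :
    IsKSubmodular f ↔ OrthantSubmodular f ∧ PairwiseMonotone f := by
  constructor
  · intro hf
    refine ⟨?_, ?_⟩
    · intro p q e i hpq hq hi
      have h := hf (Function.update p e i) q
      have h1 : kSup (Function.update p e i) q = Function.update q e i := by
        funext e'
        have := hpq e'
        simp only [kSup, Function.update_apply]
        grind
      have h2 : kInf (Function.update p e i) q = p := by
        funext e'
        have := hpq e'
        simp only [kInf, Function.update_apply]
        grind
      rw [h1, h2] at h
      unfold marg
      linarith
    · intro p e i j hp hi hj hij
      have h := hf (Function.update p e i) (Function.update p e j)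
      have h1 : kSup (Function.update p e i) (Function.update p e j) = p := by
        funext e'
        simp only [kSup, Function.update_apply]
        grind
      have h2 : kInf (Function.update p e i) (Function.update p e j) = p := by
        funext e'
        simp only [kInf, Function.update_apply]
        grind
      rw [h1, h2] at h
      unfold marg
      linarith
  · rintro ⟨hf, hg⟩ p q
    let S : Finset E := Finset.univ.filter (fun e => p e ≠ q e ∧ p e ≠ 0 ∧ q e ≠ 0)
    let T : Finset E := Finset.univ.filter (fun e => p e ≠ 0 ∧ q e = 0)
    have hS : ∀ e, e ∈ S ↔ (p e ≠ q e ∧ p e ≠ 0 ∧ q e ≠ 0) := by intro e; simp [S]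
    have hT : ∀ e, e ∈ T ↔ (p e ≠ 0 ∧ q e = 0) := by intro e; simp [T]
    clear_value S T
    let z : E → Fin (k+1) := fun _ => 0
    have hz : ∀ e, z e = 0 := fun _ => rfl
    clear_value z
    have a1 := aux_D hf (S.piecewise z p) (kSup p q) p
      (by intro e; have := hS e; simp only [kSup, Finset.piecewise]; grind) S
      (by intro e; have := hS e; simp only [kSup]; grind)
    have a2 := aux_D hf (S.piecewise z q) (kSup p q) q
      (by intro e; have := hS e; simp only [kSup, Finset.piecewise]; grind) S
      (by intro e; have := hS e; simp only [kSup]; grind)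
    have a3 := aux_C hf hg (S.piecewise q (kSup p q)) _ (S.piecewise p (kSup p q)) rfl
      (by intro e; have := hS e; simp only [Finset.piecewise]; grind)
    have a4 := aux_D hf (kInf p q) (S.piecewise z q) p
      (by intro e; have := hS e; simp only [kInf, Finset.piecewise]; grind) T
      (by intro e; have := hS e; have := hT e; simp only [Finset.piecewise]; grind)
    have e1 : S.piecewise p (S.piecewise z p) = p := by
      funext e; simp only [Finset.piecewise]; grind
    have e2 : S.piecewise q (S.piecewise z q) = q := by
      funext e; simp only [Finset.piecewise]; grind
    have e3 : kInf (S.piecewise p (kSup p q)) (S.piecewise q (kSup p q)) = kSup p q := by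
      funext e; have := hS e; simp only [kInf, kSup, Finset.piecewise]; grind
    have e4 : T.piecewise p (S.piecewise z q) = kSup p q := by
      funext e; have := hS e; have := hT e; have := hz e
      simp only [kSup, Finset.piecewise]; grind
    have e5 : T.piecewise p (kInf p q) = S.piecewise z p := by
      funext e; have := hS e; have := hT e; have := hz e
      simp only [kInf, Finset.piecewise]; grind
    rw [e1] at a1
    rw [e2] at a2
    rw [e3] at a3
    rw [e4, e5] at a4
    linarith
end

section
/- Let f : (k+1)^E → ℝ be a monotone k-submodular function, let ε ∈ (0,1) and w ∈ ℝ. Let p, q ∈ (k+1)^E with p ⪯ q, let e, u ∈ E with e ∉ supp(q) and u ∉ supp(q), and let i, i* ∈ {1,…,k}. If Δ_{e,i} f(p) ≥ w and Δ_{u,i*} f(p) < w/(1−ε), then f(q + i*·1_u) − f(q + i·1_e) < (1/(1−ε)) · Δ_{e,i} f(p). -/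
/-- Claim 1, monotone case: per-step exchange inequality. -/
theorem monotone_exchange_step
    {E : Type*} [Fintype E] [DecidableEq E] {k : ℕ} (hk : 1 ≤ k)
    (f : (E → Fin (k+1)) → ℝ) (hf : IsKSubmodular f) (hmono : KMonotone f)
    (ε w : ℝ) (hε : ε ∈ Set.Ioo (0 : ℝ) 1)
    (p q : E → Fin (k+1)) (hpq : kLE p q)
    (e u : E) (he : q e = 0) (hu : q u = 0)
    (i j : Fin (k+1)) (hi : i ≠ 0) (hj : j ≠ 0)
    (h1 : w ≤ marg f p e i) (h2 : marg f p u j < w / (1 - ε)) :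
    f (Function.update q u j) - f (Function.update q e i)
      < (1 / (1 - ε)) * marg f p e i := by
  have hpu : p u = 0 := by
    by_contra h
    exact h ((hpq u h).trans hu)
  have hsup : kSup (Function.update p u j) q = Function.update q u j := by
    funext x
    by_cases hx : x = u
    · subst hx
      simp [kSup, hu]
    · have := hpq x
      simp only [kSup, Function.update_of_ne hx]
      grind
  have hinf : kInf (Function.update p u j) q = p := by
    funext x
    by_cases hx : x = u
    · subst hx
      simp [kInf, hu, hpu, hj]
    · have := hpq x
      simp only [kInf, Function.update_of_ne hx]
      grind
  have key := hf (Function.update p u j) q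
  rw [hsup, hinf] at key
  have hm : f q ≤ f (Function.update q e i) := by
    apply hmono
    intro x hx
    have hxe : x ≠ e := by
      rintro rfl
      exact hx he
    simp [Function.update_of_ne hxe]
  have h0 : 0 < 1 - ε := by linarith [hε.2]
  have h3 : w / (1 - ε) ≤ (1 / (1 - ε)) * marg f p e i := by
    rw [one_div, inv_mul_eq_div]
    gcongr
  have h4 : marg f p u j = f (Function.update p u j) - f p := rfl
  linarith
end

section
/- Let k ≥ 2 and let f : (k+1)^E → ℝ be a (possibly non-monotone) k-submodular function, let ε ∈ (0,1) and w ∈ ℝ. Let p, q ∈ (k+1)^E with p ⪯ q, let e, u ∈ E with e ∉ supp(q) and u ∉ supp(q), and let i, i* ∈ {1,…,k}. Assume i maximizes the marginal gain at e, i.e., Δ_{e,i'} f(p) ≤ Δ_{e,i} f(p) for every i' ∈ {1,…,k}. If Δ_{e,i} f(p) ≥ w and Δ_{u,i*} f(p) < w/(1−ε), then f(q + i*·1_u) − f(q + i·1_e) < ((2−ε)/(1−ε)) · Δ_{e,i} f(p). -/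
theorem aux_orth {E : Type*} [DecidableEq E] {k : ℕ}
    (f : (E → Fin (k+1)) → ℝ) (hf : IsKSubmodular f) : OrthantSubmodular f := by
  intro p q e i hpq hq hi
  have h := hf (Function.update p e i) q
  have hp : p e = 0 := by
    by_contra h0
    exact h0 ((hpq e h0).trans hq)
  have h1 : kSup (Function.update p e i) q = Function.update q e i := by
    funext x
    have := hpq x
    by_cases hx : x = e
    · subst hx; simp [kSup, hq]
    · simp only [kSup, Function.update_of_ne hx]
      grind
  have h2 : kInf (Function.update p e i) q = p := by
    funext x
    have := hpq x
    by_cases hx : x = e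
    · subst hx; simp [kInf, hq, hp, hi]
    · simp only [kInf, Function.update_of_ne hx]
      grind
  rw [h1, h2] at h
  unfold marg
  linarith

theorem aux_pair {E : Type*} [DecidableEq E] {k : ℕ}
    (f : (E → Fin (k+1)) → ℝ) (hf : IsKSubmodular f) : PairwiseMonotone f := by
  intro p e i j hp hi hj hij
  have h := hf (Function.update p e i) (Function.update p e j)
  have h1 : kSup (Function.update p e i) (Function.update p e j) = p := by
    funext x
    by_cases hx : x = e
    · subst hx; simp [kSup, hp, hi, hj, hij.symm]
    · simp [kSup, Function.update_of_ne hx]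
  have h2 : kInf (Function.update p e i) (Function.update p e j) = p := by
    funext x
    by_cases hx : x = e
    · subst hx; simp [kInf, hp, hij]
    · simp [kInf, Function.update_of_ne hx]
  rw [h1, h2] at h
  unfold marg
  linarith

/-- Claim 2, non-monotone case: per-step exchange inequality,
where `i` greedily maximizes the marginal gain at `e`. -/
theorem nonmonotone_exchange_step
    {E : Type*} [Fintype E] [DecidableEq E] {k : ℕ} (hk : 2 ≤ k)
    (f : (E → Fin (k+1)) → ℝ) (hf : IsKSubmodular f)
    (ε w : ℝ) (hε : ε ∈ Set.Ioo (0 : ℝ) 1)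
    (p q : E → Fin (k+1)) (hpq : kLE p q)
    (e u : E) (he : q e = 0) (hu : q u = 0)
    (i j : Fin (k+1)) (hi : i ≠ 0) (hj : j ≠ 0)
    (hmax : ∀ i' : Fin (k+1), i' ≠ 0 → marg f p e i' ≤ marg f p e i)
    (h1 : w ≤ marg f p e i) (h2 : marg f p u j < w / (1 - ε)) :
    f (Function.update q u j) - f (Function.update q e i)
      < ((2 - ε) / (1 - ε)) * marg f p e i := by
  have ho := aux_orth f hf
  obtain ⟨i', hi', hne⟩ : ∃ i' : Fin (k+1), i' ≠ 0 ∧ i ≠ i' := by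
    by_cases h : i = ⟨1, by omega⟩
    · refine ⟨⟨2, by omega⟩, ?_, ?_⟩
      · simp [Fin.ext_iff]
      · simp [h, Fin.ext_iff]
    · exact ⟨⟨1, by omega⟩, by simp [Fin.ext_iff], h⟩
  have a1 := ho p q u j hpq hu hj
  have a2 := ho p q e i' hpq he hi'
  have a3 := aux_pair f hf q e i i' he hi hi' hne
  have a4 := hmax i' hi'
  have hpos : 0 < 1 - ε := by linarith [hε.2]
  have a5 : w / (1 - ε) ≤ marg f p e i / (1 - ε) := by gcongr
  have a6 : ((2 - ε) / (1 - ε)) * marg f p e i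
      = marg f p e i + marg f p e i / (1 - ε) := by
    field_simp
    ring
  rw [a6]
  have a7 : f (Function.update q u j) - f (Function.update q e i)
      = marg f q u j - marg f q e i := by
    unfold marg; ring
  linarith
end
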